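/- Relative entropy of morphisms in FinStat is functorial. Precisely: let X, Y, Z be finite sets, let f : X → Y and g : Y → Z be functions (identified with their pure channels), let s : Y ⇝ X be a stochastic section of f and t : Z ⇝ Y a stochastic section of g, and let p be a probability distribution on X. Then, as an identity in [0,∞], D( p, (s∘t)∘((g∘f)∘p) ) = D( p, s∘(f∘p) ) + D( f∘p, t∘(g∘(f∘p)) ). -/

import Mathlib

open scoped ENNReal BigOperators

/-- A probability distribution on a finite set `X`. -/
def IsDist {X : Type*} [Fintype X] (p : X → ℝ) : Prop :=
  (∀ x, 0 ≤ p x) ∧ ∑ x, p x = 1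

/-- A channel from `X` to `Y`; `f y x` is the probability of output `y` given input `x`. -/
def IsChannel {X Y : Type*} [Fintype Y] (f : Y → X → ℝ) : Prop :=
  (∀ y x, 0 ≤ f y x) ∧ ∀ x, ∑ y, f y x = 1

/-- Composite of channels: `(g ∘ f) z x = ∑ y, g z y * f y x`. -/
noncomputable def chComp {X Y Z : Type*} [Fintype Y]
    (g : Z → Y → ℝ) (f : Y → X → ℝ) : Z → X → ℝ :=
  fun z x => ∑ y, g z y * f y x

/-- The pure (deterministic) channel associated to a function. -/
def pureCh {X Y : Type*} [DecidableEq Y] (φ : X → Y) : Y → X → ℝ :=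
  fun y x => if y = φ x then 1 else 0

/-- Pushforward of a distribution along a channel. -/
noncomputable def push {X Y : Type*} [Fintype X] (f : Y → X → ℝ) (p : X → ℝ) : Y → ℝ :=
  fun y => ∑ x, f y x * p x

/-- The identity channel. -/
def idChan {X : Type*} [DecidableEq X] : X → X → ℝ :=
  fun x x' => if x = x' then 1 else 0

/-- `s : Y ⇝ X` is a stochastic section of `φ : X → Y` if it is a channel and `φ ∘ s = id_Y`. -/
def IsSection {X Y : Type*} [Fintype X] [Fintype Y] [DecidableEq Y]
    (φ : X → Y) (s : X → Y → ℝ) : Prop :=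
  IsChannel s ∧ chComp (pureCh φ) s = idChan

open scoped Classical in
/-- Relative entropy `D(p,q) ∈ [0,∞]`, with the conventions `0·log(0/q) = 0` and
`p·log(p/0) = ∞` for `p ≠ 0`. -/
noncomputable def relEnt {X : Type*} [Fintype X] (p q : X → ℝ) : ℝ≥0∞ :=
  if ∀ x, p x ≠ 0 → q x ≠ 0 then
    ENNReal.ofReal (∑ x, if p x = 0 then 0 else p x * Real.log (p x / q x))
  else ⊤

theorem aux_section {X Y : Type*} [Fintype X] [Fintype Y] [DecidableEq Y]
    {φ : X → Y} {s : X → Y → ℝ} (hs : IsSection φ s) (x : X) (y : Y) (h : y ≠ φ x) :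
    s x y = 0 := by
  have h1 := congrFun (congrFun hs.2 (φ x)) y
  simp only [chComp, pureCh, idChan, if_neg (Ne.symm h)] at h1
  rw [Finset.sum_eq_zero_iff_of_nonneg] at h1
  · simpa using h1 x (Finset.mem_univ x)
  · intro i _
    have := hs.1.1 i y
    split_ifs <;> simp [this]

theorem aux_push {X Y : Type*} [Fintype X] [Fintype Y] [DecidableEq Y]
    {φ : X → Y} {s : X → Y → ℝ} (hs : IsSection φ s) (q : Y → ℝ) (x : X) :
    push s q x = s x (φ x) * q (φ x) := by
  unfold push
  apply Finset.sum_eq_single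
  · intro b _ hb
    rw [aux_section hs x b hb, zero_mul]
  · simp

theorem aux_push_assoc {X Y Z : Type*} [Fintype X] [Fintype Y]
    (a : Z → Y → ℝ) (b : Y → X → ℝ) (q : X → ℝ) :
    push (chComp a b) q = push a (push b q) := by
  funext z
  simp only [push, chComp, Finset.sum_mul, Finset.mul_sum]
  rw [Finset.sum_comm]
  simp only [mul_assoc]

theorem aux_pure_comp {X Y Z : Type*} [Fintype Y] [DecidableEq Y] [DecidableEq Z]
    (f : X → Y) (g : Y → Z) : pureCh (g ∘ f) = chComp (pureCh g) (pureCh f) := by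
  funext z x
  simp [pureCh, chComp]

theorem aux_pure_channel {X Y : Type*} [Fintype Y] [DecidableEq Y]
    (f : X → Y) : IsChannel (pureCh f) := by
  constructor
  · intro y x
    unfold pureCh
    split_ifs <;> norm_num
  · intro x
    simp [pureCh]

theorem aux_push_dist {X Y : Type*} [Fintype X] [Fintype Y]
    {f : Y → X → ℝ} {p : X → ℝ} (hf : IsChannel f) (hp : IsDist p) : IsDist (push f p) := by
  constructor
  · intro y
    exact Finset.sum_nonneg fun x _ => mul_nonneg (hf.1 y x) (hp.1 x)
  · unfold push
    rw [Finset.sum_comm]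
    simp only [← Finset.sum_mul, hf.2, one_mul, hp.2]

theorem aux_pure_pos {X Y : Type*} [Fintype X] [DecidableEq Y]
    (f : X → Y) {p : X → ℝ} (hp : IsDist p) (x : X) (hx : p x ≠ 0) :
    push (pureCh f) p (f x) ≠ 0 := by
  intro h
  unfold push at h
  rw [Finset.sum_eq_zero_iff_of_nonneg] at h
  · exact hx (by simpa [pureCh] using h x (Finset.mem_univ x))
  · intro i _
    have := hp.1 i
    unfold pureCh
    split_ifs <;> simp [this]

theorem aux_pure_exists {X Y : Type*} [Fintype X] [DecidableEq Y]
    (f : X → Y) {p : X → ℝ} (y : Y) (hy : push (pureCh f) p y ≠ 0) :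
    ∃ x, p x ≠ 0 ∧ f x = y := by
  obtain ⟨x, _, hx⟩ := Finset.exists_ne_zero_of_sum_ne_zero hy
  refine ⟨x, right_ne_zero_of_mul hx, ?_⟩
  by_contra h
  exact left_ne_zero_of_mul hx (if_neg (Ne.symm h))

theorem aux_pure_sum {X Y : Type*} [Fintype X] [Fintype Y] [DecidableEq Y]
    (f : X → Y) (p : X → ℝ) (F : Y → ℝ) :
    ∑ y, push (pureCh f) p y * F y = ∑ x, p x * F (f x) := by
  simp only [push, Finset.sum_mul]
  rw [Finset.sum_comm]
  refine Finset.sum_congr rfl fun x _ => ?_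
  simp [pureCh]

theorem aux_gibbs {X : Type*} [Fintype X] {p q : X → ℝ} (hp : IsDist p) (hq : IsDist q)
    (h : ∀ x, p x ≠ 0 → q x ≠ 0) : 0 ≤ ∑ x, p x * Real.log (p x / q x) := by
  have : ∑ x, (p x - q x) ≤ ∑ x, p x * Real.log (p x / q x) := by
    refine Finset.sum_le_sum fun x _ => ?_
    by_cases hx : p x = 0
    · simp [hx, hq.1 x]
    · have hp0 := lt_of_le_of_ne (hp.1 x) (Ne.symm hx)
      have hq0 := lt_of_le_of_ne (hq.1 x) (Ne.symm (h x hx))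
      have h1 := Real.one_sub_inv_le_log_of_pos (div_pos hp0 hq0)
      have h2 := mul_le_mul_of_nonneg_left h1 hp0.le
      have h3 : p x * (1 - (p x / q x)⁻¹) = p x - q x := by
        field_simp
      linarith
  rw [Finset.sum_sub_distrib, hp.2, hq.2] at this
  linarith

theorem aux_relEnt {X : Type*} [Fintype X] {p q : X → ℝ} (h : ∀ x, p x ≠ 0 → q x ≠ 0) :
    relEnt p q = ENNReal.ofReal (∑ x, p x * Real.log (p x / q x)) := by
  unfold relEnt
  rw [if_pos h]
  congr 1
  refine Finset.sum_congr rfl fun x _ => ?_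
  split_ifs with hx <;> simp [hx]

theorem aux_relEnt_top {X : Type*} [Fintype X] {p q : X → ℝ}
    (h : ¬ ∀ x, p x ≠ 0 → q x ≠ 0) : relEnt p q = ⊤ := by
  unfold relEnt
  rw [if_neg h]

/-- Relative entropy of morphisms in FinStat is functorial. -/
theorem relEnt_FinStat_functorial {X Y Z : Type*}
    [Fintype X] [Fintype Y] [Fintype Z] [DecidableEq Y] [DecidableEq Z]
    (f : X → Y) (g : Y → Z) (s : X → Y → ℝ) (t : Y → Z → ℝ) (p : X → ℝ)
    (hs : IsSection f s) (ht : IsSection g t) (hp : IsDist p) :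
    relEnt p (push (chComp s t) (push (pureCh (g ∘ f)) p))
      = relEnt p (push s (push (pureCh f) p))
        + relEnt (push (pureCh f) p)
            (push t (push (pureCh g) (push (pureCh f) p))) := by
  rw [aux_push_assoc, aux_pure_comp, aux_push_assoc]
  have hq := aux_push_dist (aux_pure_channel f) hp
  have hqpos := aux_pure_pos f hp
  have hqex := fun y => aux_pure_exists f (p := p) y
  have hsum := aux_pure_sum f p
  set q := push (pureCh f) p with hqdef
  have hu := aux_push_dist ht.1 (aux_push_dist (aux_pure_channel g) hq)
  set u := push t (push (pureCh g) q) with hudef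
  have h1 := aux_push_dist hs.1 hq
  have e1 := aux_push hs q
  have e2 := aux_push hs u
  by_cases c1 : ∀ x, p x ≠ 0 → push s q x ≠ 0
  · by_cases c2 : ∀ y, q y ≠ 0 → u y ≠ 0
    · have c3 : ∀ x, p x ≠ 0 → push s u x ≠ 0 := by
        intro x hx
        have a := c1 x hx
        rw [e1] at a
        rw [e2]
        exact mul_ne_zero (left_ne_zero_of_mul a) (c2 _ (hqpos x hx))
      rw [aux_relEnt c1, aux_relEnt c2, aux_relEnt c3,
        ← ENNReal.ofReal_add (aux_gibbs hp h1 c1) (aux_gibbs hq hu c2),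
        hsum (fun y => Real.log (q y / u y)), ← Finset.sum_add_distrib]
      congr 1
      refine Finset.sum_congr rfl fun x _ => ?_
      by_cases hx : p x = 0
      · simp [hx]
      · have a := c1 x hx
        have b := hqpos x hx
        have c := c2 _ b
        rw [e1] at a
        have d := left_ne_zero_of_mul a
        rw [← mul_add, e1, e2, ← Real.log_mul (div_ne_zero hx a) (div_ne_zero b c)]
        congr 2
        field_simp
    · rw [aux_relEnt_top c2, add_top]
      apply aux_relEnt_top
      intro c3
      apply c2
      intro y hy
      obtain ⟨x, hx, rfl⟩ := hqex y hy
      have a := c3 x hx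
      rw [e2] at a
      exact right_ne_zero_of_mul a
  · rw [aux_relEnt_top c1, top_add]
    apply aux_relEnt_top
    intro c3
    apply c1
    intro x hx
    have a := c3 x hx
    rw [e2] at a
    rw [e1]
    exact mul_ne_zero (left_ne_zero_of_mul a) (hqpos x hx)
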